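/- arXiv:2208.08387 — 2 statements merged into one kernel-verified Lean document; each statement's English description precedes it below -/
import Mathlib

section
/- Let m ≥ 1 and n ≥ 1 be integers and let a : ℕ → (0,∞) be such that Σ_{i=0}^{∞} a(i) x^i converges for every x ∈ [0,1). Define ρ̂(α) = a(|α|)·|α|!/α! and ρ(α) = (n+|α|−1)!/(α!·(n−1)!) for α ∈ ℕ^m, and let T = (T_1,…,T_m) and S = (S_1,…,S_m) be the m-tuples of backward weighted shifts on H associated with ρ̂ and ρ respectively. Suppose T is n-hypercontractive. Then T is similar to S if and only if there exist constants c, C > 0 such that c ≤ (1−x)^n · Σ_{i=0}^{∞} a(i) x^i ≤ C for all x ∈ [0,1). -/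
/-!
Write `n = d + 1` and `b(k) = binom(d+k, d)`, so that `ρ(α) = b(|α|)·|α|!/α!` has the same shape as
`ρ̂`. The proof shows that both conditions are equivalent to the existence of `C` with `a ≤ C·b`.

* Testing `Δ_T^{(n)} ≥ 0` on the vectors `e_{(N,0,…,0)}` shows that all coefficients `d_N` of
  `(1-x)^n Σ a(i) x^i` are nonnegative (`defectCoeff_nonneg`). Since `a` is the convolution of
  `(d_N)` with `b` and `d_0 = a(0)`, the lower bound `a(0)·b ≤ a` always holds.
* If `(1-x)^n Σ a(i) x^i ≤ C` on `[0,1)`, then `Σ d_N ≤ C`, and the convolution formula together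
  with the monotonicity of `b` gives `a ≤ C·b` (`le_binomWeight_of_bounded`). The converse is a
  comparison of series (`bounded_of_comparable`).
* If `a` and `b` are comparable, the diagonal operator with entries `√(b(|α|)/a(|α|))` is bounded,
  invertible and intertwines `T` and `S` (`exists_similarity`). Conversely, if `Y S_i = T_i Y` with
  `Y` injective, comparing the `e_0`-coordinates of `Y S_1^N e_{(N,0,…,0)}` and
  `T_1^N Y e_{(N,0,…,0)}` gives `a ≤ C·b` (`le_of_similar`).
-/

open scoped BigOperators

/-- `T^β = T_1^{β_1} ∘ ⋯ ∘ T_m^{β_m}` for an `m`-tuple of operators. -/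
noncomputable def tuplePow {m : ℕ} {H : Type*} [NormedAddCommGroup H]
    [InnerProductSpace ℂ H] (T : Fin m → H →L[ℂ] H) (β : Fin m → ℕ) : H →L[ℂ] H :=
  (List.ofFn fun i => (T i) ^ (β i)).prod

/-- The defect operator
`Δ_T^{(k)} = Σ_{β ∈ ℕ^m, |β| ≤ k} (−1)^{|β|}·(k!/(β!·(k−|β|)!))·(T^β)*T^β`. -/
noncomputable def deltaOp {m : ℕ} {H : Type*} [NormedAddCommGroup H]
    [InnerProductSpace ℂ H] [CompleteSpace H]
    (T : Fin m → H →L[ℂ] H) (k : ℕ) : H →L[ℂ] H :=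
  ∑ β ∈ (Finset.Iic (fun _ => k : Fin m → ℕ)).filter (fun β => ∑ i, β i ≤ k),
    ((((-1 : ℝ) ^ (∑ i, β i) *
        ((k.factorial : ℝ) /
          (((∏ i, (β i).factorial : ℕ) : ℝ) * ((k - ∑ i, β i).factorial : ℝ))) : ℝ)) : ℂ) •
      (ContinuousLinearMap.adjoint (tuplePow T β) ∘L tuplePow T β)

/-- `T` is `n`-hypercontractive if `Δ_T^{(k)} ≥ 0` for all `1 ≤ k ≤ n`. -/
def IsNHypercontractive {m : ℕ} {H : Type*} [NormedAddCommGroup H]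
    [InnerProductSpace ℂ H] [CompleteSpace H]
    (T : Fin m → H →L[ℂ] H) (n : ℕ) : Prop :=
  ∀ k : ℕ, 1 ≤ k → k ≤ n → (deltaOp T k).IsPositive

/-- `ρ̂(α) = a(|α|)·|α|!/α!`. -/
noncomputable def rhoHat (m : ℕ) (a : ℕ → ℝ) (α : Fin m → ℕ) : ℝ :=
  a (∑ i, α i) * ((∑ i, α i).factorial : ℝ) / ((∏ i, (α i).factorial : ℕ) : ℝ)

/-- `ρ(α) = (n+|α|−1)!/(α!·(n−1)!)`, the weights of the kernel `(1−⟨z,w⟩)^{−n}`. -/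
noncomputable def rhoN (m n : ℕ) (α : Fin m → ℕ) : ℝ :=
  ((n + (∑ i, α i) - 1).factorial : ℝ) /
    (((∏ i, (α i).factorial : ℕ) : ℝ) * ((n - 1).factorial : ℝ))

/-! ### Power series -/

/-- The coefficients `binom(d+k, d)` of `(1 - x)^{-(d+1)}`. -/
noncomputable def binomWeight (d k : ℕ) : ℝ := ((d + k).choose d : ℝ)

/-- The `N`-th coefficient of `(1 - x)^n · Σ a(i) x^i`. -/
noncomputable def defectCoeff (n : ℕ) (a : ℕ → ℝ) (N : ℕ) : ℝ :=
  ∑ j ∈ Finset.range (n + 1), (-1 : ℝ) ^ j * (n.choose j : ℝ) * (if j ≤ N then a (N - j) else 0)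

lemma binomWeight_pos (d k : ℕ) : 0 < binomWeight d k := by
  unfold binomWeight
  exact_mod_cast Nat.choose_pos (Nat.le_add_right d k)

lemma binomWeight_zero (d : ℕ) : binomWeight d 0 = 1 := by simp [binomWeight]

lemma binomWeight_mono (d : ℕ) : Monotone (binomWeight d) := by
  intro j k h
  unfold binomWeight
  exact_mod_cast Nat.choose_le_choose d (by omega)

lemma coeff_one_sub_pow_mul (n : ℕ) (a : ℕ → ℝ) (N : ℕ) :
    PowerSeries.coeff N ((1 - PowerSeries.X) ^ n * PowerSeries.mk a) = defectCoeff n a N := by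
  have h : ((1 - PowerSeries.X : PowerSeries ℝ)) ^ n =
      ∑ j ∈ Finset.range (n + 1),
        PowerSeries.C ((-1 : ℝ) ^ j * (n.choose j : ℝ)) * PowerSeries.X ^ j := by
    rw [sub_eq_neg_add, add_pow]
    refine Finset.sum_congr rfl fun j _ => ?_
    rw [neg_pow PowerSeries.X j]
    simp only [one_pow, mul_one, map_mul, map_pow, map_neg, map_one, map_natCast]
    ring
  rw [h, Finset.sum_mul, map_sum, defectCoeff]
  refine Finset.sum_congr rfl fun j _ => ?_
  rw [mul_assoc, PowerSeries.coeff_C_mul, PowerSeries.coeff_X_pow_mul']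
  simp

/-- `Σ a(i) x^i` is recovered from `(1 - x)^{d+1} · Σ a(i) x^i` by multiplication with
`(1 - x)^{-(d+1)}`. -/
lemma eq_sum_defectCoeff (d : ℕ) (a : ℕ → ℝ) (N : ℕ) :
    a N = ∑ p ∈ Finset.HasAntidiagonal.antidiagonal N, defectCoeff (d + 1) a p.1 * binomWeight d p.2 := by
  have h : PowerSeries.mk a = ((1 - PowerSeries.X) ^ (d + 1) * PowerSeries.mk a) *
      (PowerSeries.invOneSubPow ℝ (d + 1)).val := by
    rw [mul_right_comm, ← PowerSeries.invOneSubPow_inv_eq_one_sub_pow, Units.inv_val, one_mul]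
  have h2 := congrArg (PowerSeries.coeff N) h
  rw [PowerSeries.coeff_mul, PowerSeries.coeff_mk] at h2
  rw [h2]
  refine Finset.sum_congr rfl fun p _ => ?_
  rw [coeff_one_sub_pow_mul, PowerSeries.invOneSubPow_val_succ_eq_mk_add_choose,
    PowerSeries.coeff_mk, binomWeight]

lemma defectCoeff_zero (n : ℕ) (a : ℕ → ℝ) : defectCoeff n a 0 = a 0 := by
  rw [← coeff_one_sub_pow_mul]
  simp

lemma binomWeight_le_of_defectCoeff_nonneg {d : ℕ} {a : ℕ → ℝ}
    (hd : ∀ N, 0 ≤ defectCoeff (d + 1) a N) (N : ℕ) : a 0 * binomWeight d N ≤ a N := by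
  rw [eq_sum_defectCoeff d a N, ← defectCoeff_zero (d + 1) a]
  exact Finset.single_le_sum (f := fun p : ℕ × ℕ => defectCoeff (d + 1) a p.1 * binomWeight d p.2)
    (fun p _ => mul_nonneg (hd _) (binomWeight_pos _ _).le)
    (show ((0, N) : ℕ × ℕ) ∈ Finset.HasAntidiagonal.antidiagonal N by simp)

lemma hasSum_binomWeight (d : ℕ) {x : ℝ} (h0 : 0 ≤ x) (h1 : x < 1) :
    HasSum (fun k => binomWeight d k * x ^ k) (1 / (1 - x) ^ (d + 1)) := by
  have := hasSum_choose_mul_geometric_of_norm_lt_one (𝕜 := ℝ) d (r := x)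
    (by rwa [Real.norm_of_nonneg h0])
  simpa only [binomWeight, add_comm d] using this

/-- Nonnegative coefficients of `(1 - x)^{d+1} · Σ a(i) x^i` sum to at most the supremum of this
function, by letting `x → 1` in the partial sums; since `binom(d+k, d)` increases with `k`, the
convolution formula for `a` then gives the bound. -/
lemma le_binomWeight_of_bounded {d : ℕ} {a : ℕ → ℝ}
    (hconv : ∀ x : ℝ, 0 ≤ x → x < 1 → Summable fun i : ℕ => a i * x ^ i)
    (hd : ∀ N, 0 ≤ defectCoeff (d + 1) a N) {C : ℝ}
    (hC : ∀ x : ℝ, 0 ≤ x → x < 1 → (1 - x) ^ (d + 1) * ∑' i : ℕ, a i * x ^ i ≤ C) (N : ℕ) :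
    a N ≤ C * binomWeight d N := by
  have hle : ∀ N, defectCoeff (d + 1) a N ≤ a N := by
    intro N
    have := Finset.single_le_sum
      (f := fun p : ℕ × ℕ => defectCoeff (d + 1) a p.1 * binomWeight d p.2)
      (fun p _ => mul_nonneg (hd _) (binomWeight_pos _ _).le)
      (show ((N, 0) : ℕ × ℕ) ∈ Finset.HasAntidiagonal.antidiagonal N by simp)
    rw [← eq_sum_defectCoeff d a N] at this
    simpa [binomWeight_zero] using this
  have hpart : ∀ x : ℝ, 0 ≤ x → x < 1 →
      ∑ i ∈ Finset.range (N + 1), defectCoeff (d + 1) a i * x ^ i ≤ C := by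
    intro x h0 h1
    have hs : Summable fun i => defectCoeff (d + 1) a i * x ^ i :=
      Summable.of_nonneg_of_le (fun i => mul_nonneg (hd i) (pow_nonneg h0 i))
        (fun i => mul_le_mul_of_nonneg_right (hle i) (pow_nonneg h0 i)) (hconv x h0 h1)
    have hb := hasSum_binomWeight d h0 h1
    have hprod := tsum_mul_tsum_eq_tsum_sum_antidiagonal_of_summable_norm hs.norm hb.summable.norm
    have hA : ∑' k, ∑ p ∈ Finset.HasAntidiagonal.antidiagonal k,
        defectCoeff (d + 1) a p.1 * x ^ p.1 * (binomWeight d p.2 * x ^ p.2) =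
        ∑' k, a k * x ^ k := by
      refine tsum_congr fun k => ?_
      rw [eq_sum_defectCoeff d a k, Finset.sum_mul]
      refine Finset.sum_congr rfl fun p hp => ?_
      rw [← Finset.HasAntidiagonal.mem_antidiagonal.1 hp, pow_add]
      ring
    rw [hA, hb.tsum_eq] at hprod
    have hpos : 0 < (1 - x) ^ (d + 1) := pow_pos (by linarith) _
    have hD : ∑' i, defectCoeff (d + 1) a i * x ^ i ≤ C := by
      have := hC x h0 h1
      rw [← hprod] at this
      field_simp at this
      exact this
    exact (hs.sum_le_tsum _ fun i _ => mul_nonneg (hd i) (pow_nonneg h0 i)).trans hD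
  have hsum : ∑ i ∈ Finset.range (N + 1), defectCoeff (d + 1) a i ≤ C := by
    have hcont : Continuous fun x : ℝ =>
        ∑ i ∈ Finset.range (N + 1), defectCoeff (d + 1) a i * x ^ i := by fun_prop
    have ht := (hcont.tendsto 1).mono_left (nhdsWithin_le_nhds (s := Set.Iio (1 : ℝ)))
    simp only [one_pow, mul_one] at ht
    refine le_of_tendsto ht ?_
    filter_upwards [Ioo_mem_nhdsLT (zero_lt_one' ℝ)] with x hx
    exact hpart x hx.1.le hx.2
  calc a N = ∑ p ∈ Finset.HasAntidiagonal.antidiagonal N, defectCoeff (d + 1) a p.1 * binomWeight d p.2 :=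
        eq_sum_defectCoeff d a N
    _ ≤ ∑ p ∈ Finset.HasAntidiagonal.antidiagonal N, defectCoeff (d + 1) a p.1 * binomWeight d N :=
        Finset.sum_le_sum fun p hp => mul_le_mul_of_nonneg_left
          (binomWeight_mono d (by have := Finset.HasAntidiagonal.mem_antidiagonal.1 hp; omega)) (hd _)
    _ = (∑ i ∈ Finset.range (N + 1), defectCoeff (d + 1) a i) * binomWeight d N := by
        rw [← Finset.sum_mul, Finset.Nat.sum_antidiagonal_eq_sum_range_succ_mk]
    _ ≤ C * binomWeight d N := mul_le_mul_of_nonneg_right hsum (binomWeight_pos _ _).le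

lemma bounded_of_comparable {d : ℕ} {a : ℕ → ℝ}
    (hconv : ∀ x : ℝ, 0 ≤ x → x < 1 → Summable fun i : ℕ => a i * x ^ i) {c C : ℝ}
    (hc : ∀ N, c * binomWeight d N ≤ a N) (hC : ∀ N, a N ≤ C * binomWeight d N)
    (x : ℝ) (h0 : 0 ≤ x) (h1 : x < 1) :
    c ≤ (1 - x) ^ (d + 1) * ∑' i : ℕ, a i * x ^ i ∧
      (1 - x) ^ (d + 1) * ∑' i : ℕ, a i * x ^ i ≤ C := by
  have hb := hasSum_binomWeight d h0 h1
  have hpos : 0 < (1 - x) ^ (d + 1) := pow_pos (by linarith) _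
  have l1 := hasSum_le (fun i => by
    have := mul_le_mul_of_nonneg_right (hc i) (pow_nonneg h0 i)
    rwa [mul_assoc] at this) (hb.mul_left c) (hconv x h0 h1).hasSum
  have l2 := hasSum_le (fun i => by
    have := mul_le_mul_of_nonneg_right (hC i) (pow_nonneg h0 i)
    rwa [mul_assoc] at this) (hconv x h0 h1).hasSum (hb.mul_left C)
  rw [mul_one_div] at l1 l2
  rw [div_le_iff₀' hpos] at l1
  rw [le_div_iff₀' hpos] at l2
  exact ⟨l1, l2⟩

/-! ### Weighted shifts -/

lemma rhoHat_pos (m : ℕ) {a : ℕ → ℝ} (ha : ∀ i, 0 < a i) (α : Fin m → ℕ) :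
    0 < rhoHat m a α := by
  unfold rhoHat
  have h : 0 < ∏ i, (α i).factorial := Finset.prod_pos fun i _ => Nat.factorial_pos _
  exact div_pos (mul_pos (ha _) (by exact_mod_cast Nat.factorial_pos _)) (by exact_mod_cast h)

lemma rhoHat_single (m : ℕ) (a : ℕ → ℝ) (i : Fin m) (N : ℕ) :
    rhoHat m a (Pi.single i N) = a N := by
  have h1 : ∑ j, (Pi.single i N : Fin m → ℕ) j = N := by simp
  have h2 : ∏ j, ((Pi.single i N : Fin m → ℕ) j).factorial = N.factorial := by
    rw [Finset.prod_eq_single i (fun j _ hj => by simp [hj]) (by simp)]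
    simp
  have h3 : (N.factorial : ℝ) ≠ 0 := by exact_mod_cast Nat.factorial_ne_zero N
  rw [rhoHat, h1, h2, mul_div_assoc, div_self h3, mul_one]

/-- The weights of `(1 - ⟨z,w⟩)^{-(d+1)}` are of the same type as `ρ̂`. -/
lemma rhoN_eq_rhoHat (m d : ℕ) : rhoN m (d + 1) = rhoHat m (binomWeight d) := by
  funext α
  unfold rhoN rhoHat binomWeight
  generalize ∑ i, α i = k
  have h : (((d + k).choose d : ℕ) : ℝ) * (d.factorial : ℝ) * (k.factorial : ℝ) =
      ((d + k).factorial : ℝ) := by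
    rw [Nat.choose_symm_add]
    exact_mod_cast Nat.add_choose_mul_factorial_mul_factorial d k
  have hd : (d.factorial : ℝ) ≠ 0 := by exact_mod_cast Nat.factorial_ne_zero d
  rw [show d + 1 + k - 1 = d + k by omega, show d + 1 - 1 = d by omega, ← h]
  field_simp

section Shift

variable {m : ℕ} {H : Type*} [NormedAddCommGroup H] [InnerProductSpace ℂ H]

/-- `T` is the tuple of backward weighted shifts with weights `ρ` along the basis `e`. -/
def IsShift (e : HilbertBasis (Fin m → ℕ) ℂ H) (ρ : (Fin m → ℕ) → ℝ)
    (T : Fin m → H →L[ℂ] H) : Prop :=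
  ∀ (α : Fin m → ℕ) (i : Fin m),
    T i (e α) = if α i = 0 then 0
      else (Real.sqrt (ρ (α - Pi.single i 1) / ρ α) : ℂ) • e (α - Pi.single i 1)

lemma basis_ext (e : HilbertBasis (Fin m → ℕ) ℂ H) {v w : H}
    (h : ∀ α, inner ℂ (e α) v = inner ℂ (e α) w) : v = w := by
  apply e.repr.injective
  ext α
  simpa [HilbertBasis.repr_apply_apply] using h α

/-- The shift acts on coordinates by a weighted translation. -/
lemma IsShift.inner_apply {e : HilbertBasis (Fin m → ℕ) ℂ H} {ρ : (Fin m → ℕ) → ℝ}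
    {T : Fin m → H →L[ℂ] H} (hT : IsShift e ρ T) (i : Fin m) (α : Fin m → ℕ) (v : H) :
    inner ℂ (e α) (T i v) =
      (Real.sqrt (ρ α / ρ (α + Pi.single i 1)) : ℂ) * inner ℂ (e (α + Pi.single i 1)) v := by
  have key : (innerSL ℂ (e α)) ∘L T i =
      (Real.sqrt (ρ α / ρ (α + Pi.single i 1)) : ℂ) • innerSL ℂ (e (α + Pi.single i 1)) := by
    refine ContinuousLinearMap.ext_on
      (Submodule.dense_iff_topologicalClosure_eq_top.2 e.dense_span) ?_
    rintro _ ⟨γ, rfl⟩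
    have ho := orthonormal_iff_ite.1 e.orthonormal
    simp only [ContinuousLinearMap.comp_apply, innerSL_apply_apply, hT γ i,
      smul_apply, ho, smul_eq_mul]
    by_cases h0 : γ i = 0
    · have hne : α + Pi.single i 1 ≠ γ := by
        rintro rfl
        simp at h0
      simp [h0, hne]
    · rw [if_neg h0, inner_smul_right, ho]
      by_cases h : α + Pi.single i 1 = γ
      · subst h
        simp
      · have hne : α ≠ γ - Pi.single i 1 := by
          rintro rfl
          apply h
          funext j
          by_cases hj : j = i
          · subst hj
            simp
            omega
          · simp [hj]
        simp [h, hne]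
  exact congrArg (fun f : H →L[ℂ] ℂ => f v) key

lemma IsShift.inner_zero_pow_apply {e : HilbertBasis (Fin m → ℕ) ℂ H} {a : ℕ → ℝ}
    (ha : ∀ i, 0 < a i) {T : Fin m → H →L[ℂ] H} (hT : IsShift e (rhoHat m a) T) (i : Fin m)
    (N : ℕ) (v : H) :
    inner ℂ (e 0) (((T i) ^ N) v) =
      (Real.sqrt (a 0 / a N) : ℂ) * inner ℂ (e (Pi.single i N)) v := by
  induction N generalizing v with
  | zero => simp [div_self (ha 0).ne']
  | succ N ih =>
    rw [pow_succ, mul_apply_eq_comp, ih, hT.inner_apply, ← Pi.single_add,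
      rhoHat_single, rhoHat_single, ← mul_assoc, ← Complex.ofReal_mul, ← Real.sqrt_mul
      (div_pos (ha 0) (ha N)).le, div_mul_div_cancel₀ (ha N).ne']

lemma IsShift.pow_apply_single {e : HilbertBasis (Fin m → ℕ) ℂ H} {a : ℕ → ℝ}
    (ha : ∀ i, 0 < a i) {T : Fin m → H →L[ℂ] H} (hT : IsShift e (rhoHat m a) T) (i : Fin m)
    (j N : ℕ) :
    ((T i) ^ j) (e (Pi.single i N)) =
      if j ≤ N then (Real.sqrt (a (N - j) / a N) : ℂ) • e (Pi.single i (N - j)) else 0 := by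
  induction j with
  | zero => simp [div_self (ha N).ne']
  | succ j ih =>
    rw [pow_succ', mul_apply_eq_comp, ih]
    by_cases h : j + 1 ≤ N
    · have hsub : (Pi.single i (N - j) : Fin m → ℕ) - Pi.single i 1 = Pi.single i (N - j - 1) := by
        funext l
        by_cases hl : l = i
        · subst hl
          simp
        · simp [hl]
      rw [if_pos (by omega), if_pos h, map_smul, hT, if_neg (by simp; omega), hsub,
        rhoHat_single, rhoHat_single, smul_smul, ← Complex.ofReal_mul, ← Real.sqrt_mul
        (div_pos (ha _) (ha N)).le, Nat.sub_sub, mul_comm, div_mul_div_cancel₀ (ha _).ne']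
    · rw [if_neg h]
      by_cases h' : j ≤ N
      · have : j = N := by omega
        subst this
        simp [hT (0 : Fin m → ℕ) i]
      · simp [h']

lemma IsShift.apply_single_of_ne {e : HilbertBasis (Fin m → ℕ) ℂ H} {ρ : (Fin m → ℕ) → ℝ}
    {T : Fin m → H →L[ℂ] H} (hT : IsShift e ρ T) {i j : Fin m} (hij : j ≠ i) (k N : ℕ) :
    ((T j) ^ k) (e (Pi.single i N)) = (if k = 0 then (1 : ℂ) else 0) • e (Pi.single i N) := by
  cases k with
  | zero => simp
  | succ k =>
    rw [pow_succ, mul_apply_eq_comp, hT, if_pos (by simp [hij])]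
    simp

lemma prod_ofFn_apply_of_eigen {k : ℕ} (f : Fin k → H →L[ℂ] H) (c : Fin k → ℂ) (v : H)
    (h : ∀ i, f i v = c i • v) : (List.ofFn f).prod v = (∏ i, c i) • v := by
  induction k with
  | zero => simp
  | succ k ih =>
    rw [List.ofFn_succ, List.prod_cons, mul_apply_eq_comp,
      ih _ (fun i => c i.succ) fun i => h i.succ, map_smul, h, smul_smul, Fin.prod_univ_succ,
      mul_comm]

end Shift

/-- On `e_{(N,0,…,0)}` only the powers of the first operator contribute to `Δ_T^{(k)}`. -/
lemma tuplePow_apply_single {m : ℕ} {H : Type*} [NormedAddCommGroup H] [InnerProductSpace ℂ H]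
    {e : HilbertBasis (Fin (m + 1) → ℕ) ℂ H} {ρ : (Fin (m + 1) → ℕ) → ℝ}
    {T : Fin (m + 1) → H →L[ℂ] H} (hT : IsShift e ρ T) (β : Fin (m + 1) → ℕ) (N : ℕ) :
    tuplePow T β (e (Pi.single 0 N)) =
      if β = Pi.single 0 (β 0) then ((T 0) ^ (β 0)) (e (Pi.single 0 N)) else 0 := by
  rw [tuplePow, List.ofFn_succ, List.prod_cons, mul_apply_eq_comp,
    prod_ofFn_apply_of_eigen _ (fun i => if β i.succ = 0 then (1 : ℂ) else 0) _
      fun i => hT.apply_single_of_ne (Fin.succ_ne_zero i) _ N, map_smul]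
  split_ifs with h
  · rw [Finset.prod_eq_one, one_smul]
    intro i _
    rw [if_pos]
    rw [h]
    simp
  · have : ∃ i : Fin m, β i.succ ≠ 0 := by
      by_contra! hc
      apply h
      funext i
      cases i using Fin.cases with
      | zero => simp
      | succ i => simp [hc]
    obtain ⟨i, hi⟩ := this
    rw [Finset.prod_eq_zero (Finset.mem_univ i) (by simp [hi]), zero_smul]

/-- Positivity of `Δ_T^{(k)}` tested on `e_{(N,0,…,0)}`. -/
lemma defectCoeff_nonneg {m : ℕ} {H : Type*} [NormedAddCommGroup H] [InnerProductSpace ℂ H]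
    [CompleteSpace H] {e : HilbertBasis (Fin (m + 1) → ℕ) ℂ H} {a : ℕ → ℝ} (ha : ∀ i, 0 < a i)
    {T : Fin (m + 1) → H →L[ℂ] H} (hT : IsShift e (rhoHat (m + 1) a) T) {k : ℕ}
    (hpos : (deltaOp T k).IsPositive) (N : ℕ) : 0 ≤ defectCoeff k a N := by
  have hre := hpos.re_inner_nonneg_right (e (Pi.single 0 N))
  have hterm : ∀ β : Fin (m + 1) → ℕ, ∀ c : ℝ,
      RCLike.re (inner ℂ (e (Pi.single 0 N)) (((c : ℂ) •
        (ContinuousLinearMap.adjoint (tuplePow T β) ∘L tuplePow T β)) (e (Pi.single 0 N)))) =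
      c * ‖tuplePow T β (e (Pi.single 0 N))‖ ^ 2 := by
    intro β c
    rw [smul_apply, inner_smul_right, ContinuousLinearMap.comp_apply,
      ContinuousLinearMap.adjoint_inner_right, inner_self_eq_norm_sq_to_K]
    simp [← Complex.ofReal_pow]
  have hnorm : ∀ j : ℕ, ‖tuplePow T (Pi.single 0 j) (e (Pi.single 0 N))‖ ^ 2 =
      (if j ≤ N then a (N - j) else 0) / a N := by
    intro j
    rw [tuplePow_apply_single hT, if_pos (by simp), Pi.single_eq_same, hT.pow_apply_single ha]
    split_ifs with h
    · rw [norm_smul, e.orthonormal.1, mul_one, Complex.norm_real,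
        Real.norm_of_nonneg (Real.sqrt_nonneg _), Real.sq_sqrt (div_pos (ha _) (ha N)).le]
    · simp
  rw [deltaOp, sum_apply, inner_sum, map_sum] at hre
  simp only [hterm] at hre
  rw [← Finset.sum_subset
    (s₁ := (Finset.range (k + 1)).image fun j => (Pi.single 0 j : Fin (m + 1) → ℕ))] at hre
  · rw [Finset.sum_image fun x _ y _ h => Pi.single_injective (M := fun _ => ℕ) 0 h] at hre
    simp only [hnorm] at hre
    have : 0 ≤ defectCoeff k a N / a N := by
      refine hre.trans_eq ?_
      rw [defectCoeff, Finset.sum_div]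
      refine Finset.sum_congr rfl fun j hj => ?_
      have hjk : j ≤ k := by simpa [Nat.lt_succ_iff] using hj
      have h1 : ∑ i, (Pi.single 0 j : Fin (m + 1) → ℕ) i = j := by simp
      have h2 : ∏ i, ((Pi.single 0 j : Fin (m + 1) → ℕ) i).factorial = j.factorial := by
        rw [Fin.prod_univ_succ]
        simp
      rw [h1, h2, Nat.cast_choose ℝ hjk]
      ring
    rwa [le_div_iff₀ (ha N), zero_mul] at this
  · intro β hβ
    obtain ⟨j, hj, rfl⟩ := Finset.mem_image.1 hβ
    have hjk : j ≤ k := by simpa [Nat.lt_succ_iff] using hj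
    refine Finset.mem_filter.2 ⟨Finset.mem_Iic.2 fun i => ?_, by simpa using hjk⟩
    cases i using Fin.cases <;> simp [hjk]
  · intro β hβ hβ'
    rw [tuplePow_apply_single hT, if_neg]
    · simp
    · intro h
      refine hβ' (Finset.mem_image.2 ⟨β 0, ?_, h.symm⟩)
      have := (Finset.mem_Iic.1 (Finset.mem_filter.1 hβ).1) 0
      simpa [Nat.lt_succ_iff] using this

/-! ### Similarity -/

/-- The operator with matrix `diag(c)` in the basis `e`. -/
lemma exists_diagonal {ι H : Type*} [NormedAddCommGroup H] [InnerProductSpace ℂ H]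
    (e : HilbertBasis ι ℂ H) (c : ι → ℝ) {K : ℝ} (hK : 0 ≤ K) (hc : ∀ α, |c α| ≤ K) :
    ∃ D : H →L[ℂ] H, ∀ v α, inner ℂ (e α) (D v) = (c α : ℂ) * inner ℂ (e α) v := by
  let M : lp (fun _ : ι => ℂ) 2 →L[ℂ] lp (fun _ : ι => ℂ) 2 :=
    lp.mapCLM 2 (fun α => (c α : ℂ) • ContinuousLinearMap.id ℂ ℂ) hK (fun α => by
      rw [norm_smul]
      simpa using hc α)
  refine ⟨(e.repr.symm.toContinuousLinearEquiv : lp (fun _ : ι => ℂ) 2 →L[ℂ] H) ∘L M ∘L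
    (e.repr.toContinuousLinearEquiv : H →L[ℂ] lp (fun _ : ι => ℂ) 2), fun v α => ?_⟩
  rw [← HilbertBasis.repr_apply_apply, ← HilbertBasis.repr_apply_apply]
  simp [M]

/-- Shifts with comparable weights are similar via the diagonal operator with entries
`√(b(|α|)/a(|α|))`. -/
lemma exists_similarity {m : ℕ} {H : Type*} [NormedAddCommGroup H] [InnerProductSpace ℂ H]
    {e : HilbertBasis (Fin m → ℕ) ℂ H} {a b : ℕ → ℝ} (ha : ∀ i, 0 < a i) (hb : ∀ i, 0 < b i)
    {T S : Fin m → H →L[ℂ] H} (hT : IsShift e (rhoHat m a) T) (hS : IsShift e (rhoHat m b) S)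
    {c C : ℝ} (hc : 0 < c) (hcb : ∀ N, c * b N ≤ a N) (hCb : ∀ N, a N ≤ C * b N) :
    ∃ X : H ≃L[ℂ] H, ∀ (i : Fin m) (v : H), X (T i v) = S i (X v) := by
  have hquot : ∀ α : Fin m → ℕ, rhoHat m b α / rhoHat m a α = b (∑ i, α i) / a (∑ i, α i) := by
    intro α
    unfold rhoHat
    have h : ((∏ i, (α i).factorial : ℕ) : ℝ) ≠ 0 := by
      exact_mod_cast Finset.prod_ne_zero_iff.2 fun i _ => Nat.factorial_ne_zero _
    have h' : ((∑ i, α i).factorial : ℝ) ≠ 0 := by exact_mod_cast Nat.factorial_ne_zero _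
    have := (ha (∑ i, α i)).ne'
    field_simp
  let x : (Fin m → ℕ) → ℝ := fun α => Real.sqrt (rhoHat m b α / rhoHat m a α)
  have hxpos : ∀ α, 0 < x α := fun α =>
    Real.sqrt_pos.2 (div_pos (rhoHat_pos m hb α) (rhoHat_pos m ha α))
  obtain ⟨D, hD⟩ := exists_diagonal e x (Real.sqrt_nonneg (1 / c)) (fun α => by
    rw [abs_of_pos (hxpos α)]
    refine Real.sqrt_le_sqrt ?_
    rw [hquot, div_le_div_iff₀ (ha _) hc]
    linarith [hcb (∑ i, α i)])
  obtain ⟨D', hD'⟩ := exists_diagonal e (fun α => (x α)⁻¹) (Real.sqrt_nonneg C) (fun α => by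
    rw [abs_of_pos (inv_pos.2 (hxpos α)), ← Real.sqrt_inv]
    refine Real.sqrt_le_sqrt ?_
    rw [hquot, inv_div, div_le_iff₀ (hb _)]
    exact hCb _)
  refine ⟨ContinuousLinearEquiv.equivOfInverse D D' (fun v => basis_ext e fun α => ?_)
    (fun v => basis_ext e fun α => ?_), fun i v => basis_ext e fun α => ?_⟩
  · rw [hD', hD, ← mul_assoc, ← Complex.ofReal_mul, inv_mul_cancel₀ (hxpos α).ne']
    simp
  · rw [hD, hD', ← mul_assoc, ← Complex.ofReal_mul, mul_inv_cancel₀ (hxpos α).ne']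
    simp
  · change inner ℂ (e α) (D (T i v)) = inner ℂ (e α) (S i (D v))
    rw [hD, hT.inner_apply, hS.inner_apply, hD, ← mul_assoc, ← mul_assoc, ← Complex.ofReal_mul,
      ← Complex.ofReal_mul]
    congr 2
    have p1 := rhoHat_pos m ha α
    have p2 := rhoHat_pos m hb α
    have p3 := rhoHat_pos m ha (α + Pi.single i 1)
    have p4 := rhoHat_pos m hb (α + Pi.single i 1)
    rw [← Real.sqrt_mul (div_pos p2 p1).le, ← Real.sqrt_mul (div_pos p2 p4).le,
      div_mul_div_cancel₀ p1.ne', div_mul_div_cancel₀ p4.ne']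

/-- If `Y` intertwines the shifts then the `e_0`-coordinate of `Y S_1^N = T_1^N Y` applied to
`e_{(N,0,…,0)}` compares the weights; `⟨e_0, Y e_0⟩ ≠ 0` because `Y e_0` lies in the joint kernel
of `T`, which is spanned by `e_0`. -/
lemma le_of_similar {m : ℕ} {H : Type*} [NormedAddCommGroup H] [InnerProductSpace ℂ H]
    {e : HilbertBasis (Fin (m + 1) → ℕ) ℂ H} {a b : ℕ → ℝ} (ha : ∀ i, 0 < a i)
    (hb : ∀ i, 0 < b i) {T S : Fin (m + 1) → H →L[ℂ] H} (hT : IsShift e (rhoHat (m + 1) a) T)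
    (hS : IsShift e (rhoHat (m + 1) b) S) (Y : H →L[ℂ] H) (hY : Function.Injective Y)
    (hYS : ∀ i v, Y (S i v) = T i (Y v)) :
    ∃ C : ℝ, 0 < C ∧ ∀ N, a N ≤ C * b N := by
  set w : ℂ := inner ℂ (e 0) (Y (e 0)) with hw
  have hw0 : w ≠ 0 := by
    intro h0
    have hYe : Y (e 0) = 0 := by
      refine basis_ext e fun α => ?_
      rw [inner_zero_right]
      by_cases hα : α = 0
      · rw [hα, ← hw, h0]
      obtain ⟨i, hi⟩ := Function.ne_iff.1 hα
      have hker : T i (Y (e 0)) = 0 := by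
        rw [← hYS, hS 0 i]
        simp
      have hsplit : α = α - Pi.single i 1 + Pi.single i 1 := by
        funext j
        by_cases hj : j = i
        · subst hj
          simp at hi ⊢
          omega
        · simp [hj]
      have hc := hT.inner_apply i (α - Pi.single i 1) (Y (e 0))
      rw [hker, inner_zero_right, ← hsplit] at hc
      have hs : (Real.sqrt (rhoHat (m + 1) a (α - Pi.single i 1) / rhoHat (m + 1) a α) : ℂ) ≠ 0 :=
        Complex.ofReal_ne_zero.2 (Real.sqrt_pos.2
          (div_pos (rhoHat_pos _ ha _) (rhoHat_pos _ ha _))).ne'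
      exact (mul_eq_zero.1 hc.symm).resolve_left hs
    have := e.orthonormal.ne_zero 0
    exact this (hY (by rw [hYe, map_zero]))
  have hpow : ∀ N v, Y (((S 0) ^ N) v) = ((T 0) ^ N) (Y v) := by
    intro N
    induction N with
    | zero => simp
    | succ N ih =>
      intro v
      rw [pow_succ, pow_succ, mul_apply_eq_comp, mul_apply_eq_comp, ih,
        hYS]
  have hwn : 0 < ‖w‖ := norm_pos_iff.2 hw0
  have hYn : 0 < ‖Y‖ := by
    refine norm_pos_iff.2 ?_
    rintro rfl
    simp [hw] at hw0
  refine ⟨‖Y‖ ^ 2 * a 0 / (‖w‖ ^ 2 * b 0), ?_, fun N => ?_⟩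
  · have := ha 0
    have := hb 0
    positivity
  have h1 := congrArg (fun u => inner ℂ (e 0) u) (hpow N (e (Pi.single 0 N)))
  simp only [hT.inner_zero_pow_apply ha, hS.pow_apply_single hb, le_refl, if_true, Nat.sub_self,
    Pi.single_zero, map_smul, inner_smul_right] at h1
  rw [← hw] at h1
  have h2 := congrArg norm h1
  rw [norm_mul, norm_mul, Complex.norm_real, Complex.norm_real,
    Real.norm_of_nonneg (Real.sqrt_nonneg _), Real.norm_of_nonneg (Real.sqrt_nonneg _)] at h2
  have h3 : ‖(inner ℂ (e (Pi.single 0 N)) (Y (e (Pi.single 0 N))) : ℂ)‖ ≤ ‖Y‖ := by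
    refine (norm_inner_le_norm _ _).trans ?_
    rw [e.orthonormal.1, one_mul]
    refine (Y.le_opNorm _).trans ?_
    rw [e.orthonormal.1, mul_one]
  have h4 : Real.sqrt (b 0 / b N) * ‖w‖ ≤ Real.sqrt (a 0 / a N) * ‖Y‖ :=
    h2.trans_le (mul_le_mul_of_nonneg_left h3 (Real.sqrt_nonneg _))
  have h5 := pow_le_pow_left₀ (by positivity) h4 2
  rw [mul_pow, mul_pow, Real.sq_sqrt (div_pos (hb 0) (hb N)).le,
    Real.sq_sqrt (div_pos (ha 0) (ha N)).le, div_mul_eq_mul_div, div_mul_eq_mul_div,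
    div_le_div_iff₀ (hb N) (ha N)] at h5
  have hb0 := hb 0
  rw [div_mul_eq_mul_div, le_div_iff₀ (by positivity)]
  linarith

/-- Theorem 1.3 / 3.3 (with the curvature condition replaced by the equivalent
bounded-kernel-ratio condition from its proof): if the backward weighted shift tuple `T`
associated with `ρ̂(α) = a(|α|)·|α|!/α!` is `n`-hypercontractive, then `T` is similar to the
backward shift tuple `S` of `H²_n` (weights `ρ(α) = (n+|α|−1)!/(α!(n−1)!)`) iff
`(1−x)^n · Σ a(i) x^i` is bounded above and below by positive constants on `[0,1)`. -/
theorem stmt_16 (m n : ℕ) (hm : 1 ≤ m) (hn : 1 ≤ n)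
    (a : ℕ → ℝ) (ha : ∀ i, 0 < a i)
    (hconv : ∀ x : ℝ, 0 ≤ x → x < 1 → Summable fun i : ℕ => a i * x ^ i)
    {H : Type*} [NormedAddCommGroup H] [InnerProductSpace ℂ H] [CompleteSpace H]
    (e : HilbertBasis (Fin m → ℕ) ℂ H)
    (T S : Fin m → H →L[ℂ] H)
    (hTcomm : ∀ i j, T i ∘L T j = T j ∘L T i)
    (hScomm : ∀ i j, S i ∘L S j = S j ∘L S i)
    (hT : ∀ (α : Fin m → ℕ) (i : Fin m),
      T i (e α) = if α i = 0 then 0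
        else (Real.sqrt (rhoHat m a (α - Pi.single i 1) / rhoHat m a α) : ℂ) •
          e (α - Pi.single i 1))
    (hS : ∀ (α : Fin m → ℕ) (i : Fin m),
      S i (e α) = if α i = 0 then 0
        else (Real.sqrt (rhoN m n (α - Pi.single i 1) / rhoN m n α) : ℂ) •
          e (α - Pi.single i 1))
    (hyp : IsNHypercontractive T n) :
    (∃ X : H ≃L[ℂ] H, ∀ (i : Fin m) (v : H), X (T i v) = S i (X v)) ↔
      ∃ c C : ℝ, 0 < c ∧ 0 < C ∧ ∀ x : ℝ, 0 ≤ x → x < 1 →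
        c ≤ (1 - x) ^ n * ∑' i : ℕ, a i * x ^ i ∧
        (1 - x) ^ n * ∑' i : ℕ, a i * x ^ i ≤ C := by
  obtain ⟨m, rfl⟩ : ∃ k, m = k + 1 := ⟨m - 1, by omega⟩
  obtain ⟨d, rfl⟩ : ∃ k, n = k + 1 := ⟨n - 1, by omega⟩
  rw [rhoN_eq_rhoHat] at hS
  have hT' : IsShift e (rhoHat (m + 1) a) T := hT
  have hS' : IsShift e (rhoHat (m + 1) (binomWeight d)) S := hS
  have hd : ∀ N, 0 ≤ defectCoeff (d + 1) a N := defectCoeff_nonneg ha hT' (hyp _ hn le_rfl)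
  have hlow := binomWeight_le_of_defectCoeff_nonneg hd
  constructor
  · rintro ⟨X, hX⟩
    obtain ⟨C, hC0, hC⟩ := le_of_similar ha (binomWeight_pos d) hT' hS' (X.symm : H →L[ℂ] H)
      X.symm.injective fun i v => by
        apply X.injective
        simp [hX]
    exact ⟨a 0, C, ha 0, hC0, bounded_of_comparable hconv hlow hC⟩
  · rintro ⟨c, C, -, -, h⟩
    exact exists_similarity ha (binomWeight_pos d) hT' hS' (ha 0) hlow
      (le_binomWeight_of_bounded hconv hd fun x h0 h1 => (h x h0 h1).2)
end

section
/- Let T and S be bounded operators on a complex separable Hilbert space with orthonormal basis (e_j)_{j≥0}, acting as unilateral weighted shifts: T e_j = λ_j e_{j+1} and S e_j = μ_j e_{j+1} for all j ≥ 0, where all λ_j, μ_j are nonzero complex numbers. Then T is similar to S (there is a bounded invertible operator X with X T = S X) if and only if there exist constants C_1, C_2 > 0 such that 0 < C_1 ≤ |λ_k λ_{k+1} ⋯ λ_l / (μ_k μ_{k+1} ⋯ μ_l)| ≤ C_2 for all integers 0 ≤ k ≤ l. -/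
/-!
Write `L n = λ₀⋯λₙ₋₁` and `M n = μ₀⋯μₙ₋₁`. The product ratio over `[k, l]` is
`(L (l+1) / M (l+1)) / (L k / M k)`, so the condition in the theorem amounts to the quotients
`L n / M n` being bounded above and away from zero.

If `X` is invertible and `X T = S X`, compare matrix entries `x i j = ⟪e i, X (e j)⟫`. Since the
range of `S` is orthogonal to `e 0`, all `x 0 (j+1)` vanish, so `x 0 0 ≠ 0` because `X` is onto.
Along the diagonal `λₙ x (n+1) (n+1) = μₙ x n n`, hence `L n * x n n = M n * x 0 0`, and
`|x n n| ≤ ‖X‖` gives a lower bound for `|L n / M n|` (`exists_lower_bound`). The upper bound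
follows by applying this to `X⁻¹`.

Conversely, the diagonal operator with entries `M n / L n` is bounded with bounded inverse
(`exists_diagonal`) and intertwines `T` and `S`.
-/

open scoped BigOperators InnerProductSpace

section WeightedShift

variable {H : Type*} [NormedAddCommGroup H] [InnerProductSpace ℂ H]

/-- Continuous linear maps agreeing on a Hilbert basis are equal. -/
lemma clm_ext_hilbertBasis {F : Type*} [NormedAddCommGroup F] [NormedSpace ℂ F]
    (e : HilbertBasis ℕ ℂ H) {A B : H →L[ℂ] F} (h : ∀ j, A (e j) = B (e j)) : A = B := by
  refine ContinuousLinearMap.ext_on (s := Set.range e) ?_ ?_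
  · rw [Submodule.dense_iff_topologicalClosure_eq_top]
    exact e.dense_span
  · rintro _ ⟨j, rfl⟩
    exact h j

lemma inner_zero_shift (e : HilbertBasis ℕ ℂ H) (S : H →L[ℂ] H) (mu : ℕ → ℂ)
    (hS : ∀ j : ℕ, S (e j) = mu j • e (j + 1)) (w : H) : ⟪e 0, S w⟫_ℂ = 0 := by
  have h : (innerSL ℂ (e 0)).comp S = 0 := by
    refine clm_ext_hilbertBasis e fun j => ?_
    simp [hS, orthonormal_iff_ite.mp e.orthonormal]
  simpa using congrArg (fun A : H →L[ℂ] ℂ => A w) h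

lemma inner_succ_shift (e : HilbertBasis ℕ ℂ H) (S : H →L[ℂ] H) (mu : ℕ → ℂ)
    (hS : ∀ j : ℕ, S (e j) = mu j • e (j + 1)) (n : ℕ) (w : H) :
    ⟪e (n + 1), S w⟫_ℂ = mu n * ⟪e n, w⟫_ℂ := by
  have h : (innerSL ℂ (e (n + 1))).comp S = mu n • innerSL ℂ (e n) := by
    refine clm_ext_hilbertBasis e fun j => ?_
    by_cases hj : n = j
    · subst hj
      simp [hS, e.orthonormal.1]
    · simp [hS, orthonormal_iff_ite.mp e.orthonormal, hj]
  simpa using congrArg (fun A : H →L[ℂ] ℂ => A w) h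

/-- An invertible intertwiner `X T = S X` bounds `|μ₀⋯μₙ₋₁|` by a constant multiple of
`|λ₀⋯λₙ₋₁|`, by comparing the diagonal matrix entries of `X` with the corner entry. -/
lemma exists_lower_bound (e : HilbertBasis ℕ ℂ H) (T S : H →L[ℂ] H) (lam mu : ℕ → ℂ)
    (hlam : ∀ j, lam j ≠ 0)
    (hT : ∀ j : ℕ, T (e j) = lam j • e (j + 1))
    (hS : ∀ j : ℕ, S (e j) = mu j • e (j + 1))
    (X : H ≃L[ℂ] H) (hX : ∀ v : H, X (T v) = S (X v)) :
    ∃ c : ℝ, 0 < c ∧ ∀ n : ℕ,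
      c * ‖∏ j ∈ Finset.range n, mu j‖ ≤ ‖∏ j ∈ Finset.range n, lam j‖ := by
  have hrow : ∀ j : ℕ, ⟪e 0, X (e (j + 1))⟫_ℂ = 0 := by
    intro j
    have h := inner_zero_shift e S mu hS (X (e j))
    rw [← hX, hT, map_smul, inner_smul_right] at h
    exact (mul_eq_zero.mp h).resolve_left (hlam j)
  have hcorner : ⟪e 0, X (e 0)⟫_ℂ ≠ 0 := by
    intro h0
    have h : (innerSL ℂ (e 0)).comp (X : H →L[ℂ] H) = 0 := by
      refine clm_ext_hilbertBasis e fun j => ?_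
      cases j with
      | zero => simpa using h0
      | succ j => simpa using hrow j
    have h1 := congrArg (fun A : H →L[ℂ] ℂ => A (X.symm (e 0))) h
    simp [e.orthonormal.ne_zero 0] at h1
  have hdiag : ∀ n : ℕ, (∏ j ∈ Finset.range n, lam j) * ⟪e n, X (e n)⟫_ℂ =
      (∏ j ∈ Finset.range n, mu j) * ⟪e 0, X (e 0)⟫_ℂ := by
    intro n
    induction n with
    | zero => simp
    | succ n ih =>
      have h := inner_succ_shift e S mu hS n (X (e n))
      rw [← hX, hT, map_smul, inner_smul_right] at h
      rw [Finset.prod_range_succ, Finset.prod_range_succ, mul_assoc, h]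
      linear_combination mu n * ih
  have hent : ∀ n : ℕ, ‖⟪e n, X (e n)⟫_ℂ‖ ≤ ‖(X : H →L[ℂ] H)‖ := by
    intro n
    have h1 := norm_inner_le_norm (𝕜 := ℂ) (e n) (X (e n))
    have h2 := (X : H →L[ℂ] H).le_opNorm (e n)
    simp only [e.orthonormal.1 n, one_mul, mul_one, ContinuousLinearEquiv.coe_coe] at h1 h2
    exact h1.trans h2
  -- Adding `1` to the norm keeps the denominator positive.
  have hpos : 0 < ‖(X : H →L[ℂ] H)‖ + 1 := by positivity
  refine ⟨‖⟪e 0, X (e 0)⟫_ℂ‖ / (‖(X : H →L[ℂ] H)‖ + 1),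
    div_pos (norm_pos_iff.mpr hcorner) hpos, fun n => ?_⟩
  rw [div_mul_eq_mul_div, div_le_iff₀ hpos]
  have h := congrArg norm (hdiag n)
  rw [norm_mul, norm_mul] at h
  rw [mul_comm, ← h]
  exact mul_le_mul_of_nonneg_left ((hent n).trans (by linarith)) (norm_nonneg _)

/-- A bounded sequence is the diagonal of a bounded operator. -/
lemma exists_diagonal_s18 (e : HilbertBasis ℕ ℂ H) (d : ℕ → ℂ) (K : ℝ) (hd : ∀ n, ‖d n‖ ≤ K) :
    ∃ D : H →L[ℂ] H, ∀ n, D (e n) = d n • e n := by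
  have hK : 0 ≤ K := (norm_nonneg _).trans (hd 0)
  let A := lp.mapCLM (𝕜 := ℂ) (E := fun _ : ℕ => ℂ) (F := fun _ : ℕ => ℂ) 2
    (fun n => d n • ContinuousLinearMap.id ℂ ℂ) hK
    (fun n => by simpa [norm_smul] using hd n)
  refine ⟨(e.repr.symm.toContinuousLinearEquiv : _ →L[ℂ] H).comp
    (A.comp (e.repr.toContinuousLinearEquiv : H →L[ℂ] _)), fun n => ?_⟩
  apply e.repr.injective
  simp only [ContinuousLinearMap.comp_apply, ContinuousLinearEquiv.coe_coe,
    LinearIsometryEquiv.coe_toContinuousLinearEquiv, LinearIsometryEquiv.apply_symm_apply,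
    map_smul, e.repr_self]
  ext i
  change d i * (lp.single (E := fun _ : ℕ => ℂ) 2 n (1 : ℂ)) i
    = d n * (lp.single (E := fun _ : ℕ => ℂ) 2 n (1 : ℂ)) i
  by_cases hi : i = n
  · rw [hi]
  · simp [lp.single_apply, hi]

end WeightedShift



/-- Lemma 1.2 (Shields): two unilateral weighted shifts `T e_j = λ_j e_{j+1}` and
`S e_j = μ_j e_{j+1}` with nonzero weights are similar if and only if the moduli of the
ratios `λ_k⋯λ_l / (μ_k⋯μ_l)` are bounded above and below by positive constants. -/
theorem stmt_18
    {H : Type*} [NormedAddCommGroup H] [InnerProductSpace ℂ H] [CompleteSpace H]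
    (e : HilbertBasis ℕ ℂ H)
    (T S : H →L[ℂ] H)
    (lam mu : ℕ → ℂ)
    (hlam : ∀ j, lam j ≠ 0) (hmu : ∀ j, mu j ≠ 0)
    (hT : ∀ j : ℕ, T (e j) = lam j • e (j + 1))
    (hS : ∀ j : ℕ, S (e j) = mu j • e (j + 1)) :
    (∃ X : H ≃L[ℂ] H, ∀ v : H, X (T v) = S (X v)) ↔
      ∃ C₁ C₂ : ℝ, 0 < C₁ ∧ 0 < C₂ ∧
        ∀ k l : ℕ, k ≤ l →
          C₁ ≤ ‖(∏ j ∈ Finset.Icc k l, lam j) / (∏ j ∈ Finset.Icc k l, mu j)‖ ∧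
          ‖(∏ j ∈ Finset.Icc k l, lam j) / (∏ j ∈ Finset.Icc k l, mu j)‖ ≤ C₂ := by
  have hL : ∀ n, ∏ j ∈ Finset.range n, lam j ≠ 0 := fun n =>
    Finset.prod_ne_zero_iff.mpr fun j _ => hlam j
  have hM : ∀ n, ∏ j ∈ Finset.range n, mu j ≠ 0 := fun n =>
    Finset.prod_ne_zero_iff.mpr fun j _ => hmu j
  constructor
  · rintro ⟨X, hX⟩
    obtain ⟨c, hc, hcb⟩ := exists_lower_bound e T S lam mu hlam hT hS X hX
    obtain ⟨c', hc', hcb'⟩ := exists_lower_bound e S T mu lam hmu hS hT X.symm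
      (fun v => by rw [X.symm_apply_eq, hX, X.apply_symm_apply])
    have hprod : ∀ (a : ℕ → ℂ), (∀ j, a j ≠ 0) → ∀ k l : ℕ, k ≤ l →
        ∏ j ∈ Finset.Icc k l, a j =
          (∏ j ∈ Finset.range (l + 1), a j) / ∏ j ∈ Finset.range k, a j := by
      intro a ha k l hkl
      rw [eq_div_iff (Finset.prod_ne_zero_iff.mpr fun j _ => ha j), mul_comm,
        ← Finset.Ico_add_one_right_eq_Icc]
      exact Finset.prod_range_mul_prod_Ico a (by omega)
    refine ⟨c * c', (c * c')⁻¹, by positivity, by positivity, fun k l hkl => ?_⟩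
    rw [hprod lam hlam k l hkl, hprod mu hmu k l hkl]
    simp only [norm_div]
    have p1 := norm_pos_iff.mpr (hL k)
    have p2 := norm_pos_iff.mpr (hL (l + 1))
    have p3 := norm_pos_iff.mpr (hM k)
    have p4 := norm_pos_iff.mpr (hM (l + 1))
    have a1 := hcb k
    have a2 := hcb (l + 1)
    have b1 := hcb' k
    have b2 := hcb' (l + 1)
    rw [div_div_div_eq]
    constructor
    · rw [le_div_iff₀ (by positivity)]
      have := mul_le_mul a2 b1 (by positivity) (by positivity)
      linarith
    · rw [inv_eq_one_div, div_le_div_iff₀ (by positivity) (by positivity)]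
      have := mul_le_mul a1 b2 (by positivity) (by positivity)
      linarith
  · rintro ⟨C₁, C₂, h1, h2, hb⟩
    -- The empty product `n = 0` is not covered by the hypothesis, hence the `max` with `1`.
    have hd : ∀ n, ‖(∏ j ∈ Finset.range n, mu j) / ∏ j ∈ Finset.range n, lam j‖
        ≤ max 1 C₁⁻¹ := by
      intro n
      cases n with
      | zero => simp
      | succ n =>
        have h := (hb 0 n (Nat.zero_le n)).1
        rw [← Nat.range_succ_eq_Icc_zero] at h
        rw [← inv_div, norm_inv]
        exact (inv_anti₀ h1 h).trans (le_max_right _ _)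
    have hd' : ∀ n, ‖(∏ j ∈ Finset.range n, lam j) / ∏ j ∈ Finset.range n, mu j‖
        ≤ max 1 C₂ := by
      intro n
      cases n with
      | zero => simp
      | succ n =>
        have h := (hb 0 n (Nat.zero_le n)).2
        rw [← Nat.range_succ_eq_Icc_zero] at h
        exact h.trans (le_max_right _ _)
    obtain ⟨D, hD⟩ := exists_diagonal_s18 e _ _ hd
    obtain ⟨D', hD'⟩ := exists_diagonal_s18 e _ _ hd'
    have hinv : D'.comp D = ContinuousLinearMap.id ℂ H := by
      refine clm_ext_hilbertBasis e fun n => ?_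
      rw [ContinuousLinearMap.comp_apply, hD, map_smul, hD', smul_smul, div_mul_div_cancel₀ (hL n),
        div_self (hM n), one_smul, ContinuousLinearMap.id_apply]
    have hinv' : D.comp D' = ContinuousLinearMap.id ℂ H := by
      refine clm_ext_hilbertBasis e fun n => ?_
      rw [ContinuousLinearMap.comp_apply, hD', map_smul, hD, smul_smul, div_mul_div_cancel₀ (hM n),
        div_self (hL n), one_smul, ContinuousLinearMap.id_apply]
    have hcomm : D.comp T = S.comp D := by
      refine clm_ext_hilbertBasis e fun n => ?_
      rw [ContinuousLinearMap.comp_apply, ContinuousLinearMap.comp_apply, hT, map_smul, hD, hD,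
        map_smul, hS, smul_smul, smul_smul, Finset.prod_range_succ, Finset.prod_range_succ]
      congr 1
      have := hL n
      have := hlam n
      field_simp
    exact ⟨ContinuousLinearEquiv.equivOfInverse D D'
      (fun v => congrArg (fun A : H →L[ℂ] H => A v) hinv)
      (fun v => congrArg (fun A : H →L[ℂ] H => A v) hinv'),
      fun v => congrArg (fun A : H →L[ℂ] H => A v) hcomm⟩
end
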